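/- Let M be the monoid ring ℤ[ℕ × ℕ] with ℤ-basis {e(i,j) : i,j ∈ ℕ} and multiplication determined recursively by e(i,j)·e(k,l) defined via the rewriting rule e(0,1)·e(1,0) = e(1,1) + e(0,0) (i.e., the ring with basis xⁱ∂ʲ and relation ∂x = x∂ + 1). Then M is isomorphic as a ring to the integral Weyl algebra A₁. -/

import Mathlib

/-- The defining relation of the integral Weyl algebra `A₁ = ℤ⟨x,∂⟩/(∂x - x∂ - 1)`:
generator `0` is `x`, generator `1` is `∂`, and `∂ * x = x * ∂ + 1`. -/
inductive WeylRel : FreeAlgebra ℤ (Fin 2) → FreeAlgebra ℤ (Fin 2) → Prop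
  | rel : WeylRel (FreeAlgebra.ι ℤ 1 * FreeAlgebra.ι ℤ 0)
      (FreeAlgebra.ι ℤ 0 * FreeAlgebra.ι ℤ 1 + 1)

/-- The integral Weyl algebra on one variable. -/
abbrev Weyl : Type := RingQuot WeylRel

/-- The element `x` of the integral Weyl algebra. -/
noncomputable def Wx : Weyl := RingQuot.mkRingHom WeylRel (FreeAlgebra.ι ℤ 0)

/-- The element `∂` of the integral Weyl algebra. -/
noncomputable def Wd : Weyl := RingQuot.mkRingHom WeylRel (FreeAlgebra.ι ℤ 1)

theorem Wd_mul_Wx : Wd * Wx = Wx * Wd + 1 := by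
  simpa [Wx, Wd] using RingQuot.mkRingHom_rel WeylRel.rel

theorem Wd_mul_Wx_pow (i : ℕ) : Wd * Wx ^ i = Wx ^ i * Wd + i • Wx ^ (i - 1) := by
  induction i with
  | zero => simp
  | succ i ih =>
    have h : Wx * (i • Wx ^ (i - 1)) = i • Wx ^ i := by
      cases i with
      | zero => simp
      | succ i => rw [mul_smul_comm, Nat.add_sub_cancel, ← pow_succ']
    rw [pow_succ', ← mul_assoc, Wd_mul_Wx, add_mul, one_mul, mul_assoc, ih, mul_add, h,
      Nat.add_sub_cancel, succ_nsmul, mul_assoc, add_assoc]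

/-- The `ℤ`-linear map `e(i,j) ↦ xⁱ∂ʲ`. -/
noncomputable def weylOfFinsupp : ((ℕ × ℕ) →₀ ℤ) →ₗ[ℤ] Weyl :=
  Finsupp.linearCombination ℤ fun p => Wx ^ p.1 * Wd ^ p.2

@[simp]
theorem weylOfFinsupp_single (i j : ℕ) :
    weylOfFinsupp (Finsupp.single (i, j) 1) = Wx ^ i * Wd ^ j := by
  simp [weylOfFinsupp]

/-- Left multiplication by `x` in the basis `xⁱ∂ʲ`. -/
noncomputable def leftX : Module.End ℤ ((ℕ × ℕ) →₀ ℤ) :=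
  Finsupp.linearCombination ℤ fun p => Finsupp.single (p.1 + 1, p.2) 1

/-- Left multiplication by `∂` in the basis `xⁱ∂ʲ`. -/
noncomputable def leftD : Module.End ℤ ((ℕ × ℕ) →₀ ℤ) :=
  Finsupp.linearCombination ℤ fun p =>
    Finsupp.single (p.1, p.2 + 1) 1 + p.1 • Finsupp.single (p.1 - 1, p.2) 1

@[simp]
theorem leftX_single (i j : ℕ) :
    leftX (Finsupp.single (i, j) 1) = Finsupp.single (i + 1, j) 1 := by
  simp [leftX]

@[simp]
theorem leftD_single (i j : ℕ) :
    leftD (Finsupp.single (i, j) 1) =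
      Finsupp.single (i, j + 1) 1 + i • Finsupp.single (i - 1, j) 1 := by
  simp only [leftD, Finsupp.linearCombination_single, one_smul]

theorem leftD_mul_leftX : leftD * leftX = leftX * leftD + 1 := by
  refine Finsupp.lhom_ext' fun ⟨i, j⟩ => LinearMap.ext_ring ?_
  simp only [LinearMap.comp_apply, Finsupp.lsingle_apply, Module.End.mul_apply,
    LinearMap.add_apply, Module.End.one_apply, leftX_single, leftD_single, map_add, map_nsmul,
    Nat.add_sub_cancel]
  cases i with
  | zero => simp
  | succ i => rw [Nat.add_sub_cancel, succ_nsmul _ (i + 1), ← add_assoc]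

/-- The action of the Weyl algebra on the free module by left multiplication. -/
noncomputable def weylAction : Weyl →+* Module.End ℤ ((ℕ × ℕ) →₀ ℤ) :=
  RingQuot.lift ⟨(FreeAlgebra.lift ℤ ![leftX, leftD]).toRingHom, by
    rintro _ _ ⟨⟩
    simpa using leftD_mul_leftX⟩

@[simp]
theorem weylAction_Wx : weylAction Wx = leftX := by
  simp [weylAction, Wx]

@[simp]
theorem weylAction_Wd : weylAction Wd = leftD := by
  simp [weylAction, Wd]

theorem weylOfFinsupp_leftX (v : (ℕ × ℕ) →₀ ℤ) :
    weylOfFinsupp (leftX v) = Wx * weylOfFinsupp v := by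
  suffices h : weylOfFinsupp ∘ₗ leftX = LinearMap.mulLeft ℤ Wx ∘ₗ weylOfFinsupp from
    LinearMap.congr_fun h v
  refine Finsupp.lhom_ext' fun ⟨i, j⟩ => LinearMap.ext_ring ?_
  simp [pow_succ', mul_assoc]

theorem weylOfFinsupp_leftD (v : (ℕ × ℕ) →₀ ℤ) :
    weylOfFinsupp (leftD v) = Wd * weylOfFinsupp v := by
  suffices h : weylOfFinsupp ∘ₗ leftD = LinearMap.mulLeft ℤ Wd ∘ₗ weylOfFinsupp from
    LinearMap.congr_fun h v
  refine Finsupp.lhom_ext' fun ⟨i, j⟩ => LinearMap.ext_ring ?_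
  simp only [LinearMap.comp_apply, Finsupp.lsingle_apply, leftD_single, map_add, map_nsmul,
    weylOfFinsupp_single, LinearMap.mulLeft_apply]
  rw [← mul_assoc Wd, Wd_mul_Wx_pow, add_mul, smul_mul_assoc, mul_assoc, ← pow_succ']

theorem weylOfFinsupp_weylAction (a : Weyl) (v : (ℕ × ℕ) →₀ ℤ) :
    weylOfFinsupp (weylAction a v) = a * weylOfFinsupp v := by
  obtain ⟨a, rfl⟩ := RingQuot.mkRingHom_surjective WeylRel a
  induction a using FreeAlgebra.induction generalizing v with
  | grade0 n => simp
  | grade1 k =>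
    fin_cases k
    · change weylOfFinsupp (weylAction Wx v) = Wx * _
      rw [weylAction_Wx, weylOfFinsupp_leftX]
    · change weylOfFinsupp (weylAction Wd v) = Wd * _
      rw [weylAction_Wd, weylOfFinsupp_leftD]
  | mul a b ha hb => rw [map_mul, map_mul, Module.End.mul_apply, ha, hb, mul_assoc]
  | add a b ha hb => rw [map_add, map_add, LinearMap.add_apply, map_add, ha, hb, add_mul]

theorem weylAction_monomial (i j : ℕ) :
    weylAction (Wx ^ i * Wd ^ j) (Finsupp.single (0, 0) 1) = Finsupp.single (i, j) 1 := by
  have hd : (leftD ^ j) (Finsupp.single (0, 0) 1) = Finsupp.single (0, j) 1 := by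
    induction j with
    | zero => simp
    | succ j ih => simp [pow_succ', ih]
  have hx : (leftX ^ i) (Finsupp.single (0, j) 1) = Finsupp.single (i, j) 1 := by
    induction i with
    | zero => simp
    | succ i ih => simp [pow_succ', ih]
  simp [hd, hx]

theorem weylAction_weylOfFinsupp (v : (ℕ × ℕ) →₀ ℤ) :
    weylAction (weylOfFinsupp v) (Finsupp.single (0, 0) 1) = v := by
  induction v using Finsupp.induction_linear with
  | zero => simp
  | add f g hf hg => rw [map_add, map_add, LinearMap.add_apply, hf, hg]
  | single p n =>
    obtain ⟨i, j⟩ := p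
    rw [← mul_one n, ← smul_eq_mul, ← Finsupp.smul_single, map_zsmul, map_zsmul,
      LinearMap.smul_apply, weylOfFinsupp_single, weylAction_monomial]

/-- The free `ℤ`-module on `ℕ × ℕ` (the underlying `ℤ`-module of the ring `M` with
basis `e(i,j)` and multiplication given by the Heisenberg rewriting rule) is additively
isomorphic to `A₁` via `e(i,j) ↦ xⁱ∂ʲ`; transporting the ring structure along this
bijection, `M` is isomorphic as a ring to the integral Weyl algebra `A₁`. -/
theorem stmt_9 : ∃ e : ((ℕ × ℕ) →₀ ℤ) ≃+ Weyl,
    ∀ i j : ℕ, e (Finsupp.single (i, j) 1) = Wx ^ i * Wd ^ j := by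
  refine ⟨{ weylOfFinsupp.toAddMonoidHom with
    invFun := fun a => weylAction a (Finsupp.single (0, 0) 1)
    left_inv := weylAction_weylOfFinsupp
    right_inv := fun a => ?_ }, weylOfFinsupp_single⟩
  change weylOfFinsupp (weylAction a _) = a
  simp [weylOfFinsupp_weylAction]
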